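/- Fix integers n ≥ 1 and 1 ≤ m₀ ≤ n. For each m₀ ≤ m ≤ n let F_m : {0,1}^m → {0,1}^m be a pairwise independent random function, with F_{m₀},…,F_n mutually independent, and define r := r^{m₀} by the downward recursion r^{n+1} = id and r^m(x) = r^{m+1}(F_m(MSB_m(x)) ‖ LSB_{n−m}(x)). Let k be a uniformly random key for a 4-wise independent family {h_k : {0,1}^n → {0,1}}, independent of (F_{m₀},…,F_n), let s(x) := h_k(r(x)), let X ⊆ {1,…,n} with 1 ≤ |X| = m ≤ n/2, let T be the random 2^m × 2^{n−m} matrix T_{ij} = (−1)^{s(i‖_X j)}, and set ρ := T·Tᵀ/2^n. Then with probability at least 1 − 5n·2^{−m/2}, the von Neumann entropy of ρ is at least m/4. -/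

import Mathlib

open scoped BigOperators Classical
open Matrix

/-- Probability of an event under a (finite, weighted) probability mass function. -/
noncomputable def pr {Ω : Type*} [Fintype Ω] (p : Ω → ℝ) (E : Ω → Prop) : ℝ :=
  ∑ ω, if E ω then p ω else 0

/-- Squared Frobenius (Hilbert–Schmidt) norm of a real matrix. -/
def frobSq {a b : Type*} [Fintype a] [Fintype b] (M : Matrix a b ℝ) : ℝ :=
  ∑ i, ∑ j, M i j ^ 2


/-- Von Neumann entropy (base 2) of a Hermitian matrix, defined via its eigenvalues;
junk value `0` if the matrix is not Hermitian. -/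
noncomputable def vnEntropy {𝕜 : Type*} [RCLike 𝕜] {d : Type*} [Fintype d] [DecidableEq d]
    (ρ : Matrix d d 𝕜) : ℝ :=
  if h : ρ.IsHermitian then -∑ i, h.eigenvalues i * Real.logb 2 (h.eigenvalues i) else 0

/-- The `m` most significant bits of an `n`-bit string (index `0` is most significant). -/
def msb {n : ℕ} (m : ℕ) (h : m ≤ n) (x : Fin n → Bool) : Fin m → Bool :=
  fun s => x ⟨s.1, lt_of_lt_of_le s.2 h⟩

/-- Replace the `m` most significant bits of `x` by `f m` applied to them,
keeping the `n - m` least significant bits: this is `f_m(MSB_m(x)) ‖ LSB_{n-m}(x)`. -/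
def rStep (n : ℕ) (f : ∀ m : ℕ, (Fin m → Bool) → (Fin m → Bool)) (m : ℕ) (h : m ≤ n)
    (x : Fin n → Bool) : Fin n → Bool :=
  fun t => if ht : (t : ℕ) < m then f m (msb m h x) ⟨t.1, ht⟩ else x t

/-- The downward recursion `r^{n+1} = id`, `r^m(x) = r^{m+1}(f_m(MSB_m(x)) ‖ LSB_{n-m}(x))`. -/
def rRec (n : ℕ) (f : ∀ m : ℕ, (Fin m → Bool) → (Fin m → Bool)) (m : ℕ)
    (x : Fin n → Bool) : Fin n → Bool :=
  if h : m ≤ n then rRec n f (m + 1) (rStep n f m h x) else x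
termination_by n + 1 - m
decreasing_by omega

/-- `i ‖_X j`: the `n`-bit string agreeing with `i` on the coordinates in `X`
and with `j` on the complementary coordinates. -/
def mergeCut {n : ℕ} (X : Finset (Fin n)) (i : {t : Fin n // t ∈ X} → Bool)
    (j : {t : Fin n // t ∉ X} → Bool) : Fin n → Bool :=
  fun t => if h : t ∈ X then i ⟨t, h⟩ else j ⟨t, h⟩

/-! ### Finite probability -/

theorem sum_prob_decouple {Ω A B : Type*} [Fintype Ω] (p : Ω → ℝ) (U : Ω → A) (V : Ω → B)
    (hUV : ∀ ω₁ ω₂, pr p (fun ω => U ω = U ω₁ ∧ V ω = V ω₂)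
      = pr p (fun ω => U ω = U ω₁) * pr p (fun ω => V ω = V ω₂))
    (φ : A → B → ℝ) :
    ∑ ω, p ω * φ (U ω) (V ω) = ∑ ω, p ω * ∑ ω', p ω' * φ (U ω) (V ω') := by
  set IU := Finset.univ.image U
  set IV := Finset.univ.image V
  have hL : ∀ ω ω', φ (U ω) (V ω') = ∑ a ∈ IU, ∑ b ∈ IV,
      (if U ω = a then 1 else 0) * (if V ω' = b then 1 else 0) * φ a b := by
    intro ω ω'
    rw [Finset.sum_eq_single_of_mem (U ω) (by simp [IU]),
      Finset.sum_eq_single_of_mem (V ω') (by simp [IV])]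
    · simp
    · intro b _ hb; simp [hb.symm]
    · intro a _ ha; simp [ha.symm]
  have h1 : ∑ ω, p ω * φ (U ω) (V ω) = ∑ a ∈ IU, ∑ b ∈ IV,
      pr p (fun ω => U ω = a ∧ V ω = b) * φ a b := by
    simp only [pr, Finset.sum_mul]
    rw [Finset.sum_congr rfl fun ω _ => by rw [hL ω ω]]
    simp only [Finset.mul_sum]
    rw [Finset.sum_comm]
    refine Finset.sum_congr rfl fun a _ => ?_
    rw [Finset.sum_comm]
    refine Finset.sum_congr rfl fun b _ => Finset.sum_congr rfl fun ω _ => ?_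
    by_cases h : U ω = a <;> by_cases h' : V ω = b <;> simp [h, h']
  have h2 : ∑ ω, p ω * ∑ ω', p ω' * φ (U ω) (V ω') = ∑ a ∈ IU, ∑ b ∈ IV,
      pr p (fun ω => U ω = a) * pr p (fun ω => V ω = b) * φ a b := by
    simp only [pr, Finset.sum_mul, Finset.mul_sum]
    rw [Finset.sum_congr rfl fun ω _ => Finset.sum_congr rfl fun ω' _ => by rw [hL ω ω']]
    simp only [Finset.mul_sum]
    rw [Finset.sum_congr rfl fun ω _ => Finset.sum_comm]
    rw [Finset.sum_comm]
    refine Finset.sum_congr rfl fun a _ => ?_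
    rw [Finset.sum_congr rfl fun ω _ => Finset.sum_comm]
    rw [Finset.sum_comm]
    refine Finset.sum_congr rfl fun b _ => ?_
    rw [Finset.sum_comm]
    refine Finset.sum_congr rfl fun ω' _ => Finset.sum_congr rfl fun ω _ => ?_
    by_cases h : U ω = a <;> by_cases h' : V ω' = b <;> simp [h, h']
    ring
  rw [h1, h2]
  refine Finset.sum_congr rfl fun a ha => Finset.sum_congr rfl fun b hb => ?_
  obtain ⟨ω₁, -, rfl⟩ := Finset.mem_image.1 ha
  obtain ⟨ω₂, -, rfl⟩ := Finset.mem_image.1 hb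
  rw [hUV]

theorem pr_eq_sum_mul {Ω : Type*} [Fintype Ω] (p : Ω → ℝ) (E : Ω → Prop)
    [DecidablePred E] : pr p E = ∑ ω, p ω * (if E ω then 1 else 0) := by
  refine Finset.sum_congr rfl fun ω _ => ?_
  by_cases h : E ω <;> simp [h]

theorem sum_pr_and_eq {Ω A : Type*} [Fintype Ω] [Fintype A] (p : Ω → ℝ) (E : Ω → Prop)
    (U : Ω → A) : ∑ a, pr p (fun ω => E ω ∧ U ω = a) = pr p E := by
  unfold pr
  rw [Finset.sum_comm]
  refine Finset.sum_congr rfl fun ω _ => ?_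
  by_cases h : E ω <;> simp [h]

theorem sum_pr_eq {Ω A : Type*} [Fintype Ω] [Fintype A] (p : Ω → ℝ) (hp1 : ∑ ω, p ω = 1)
    (U : Ω → A) : ∑ a, pr p (fun ω => U ω = a) = 1 := by
  have h := sum_pr_and_eq p (fun _ => True) U
  simp only [true_and] at h
  rw [h]
  simpa [pr] using hp1

theorem piecewise_eq_piecewise_iff {ι : Type*} [DecidableEq ι] {A : ι → Type*} (S : Finset ι)
    (f g d : ∀ k, A k) : S.piecewise f d = S.piecewise g d ↔ ∀ k ∈ S, f k = g k := by
  constructor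
  · intro h k hk
    simpa [hk] using congrFun h k
  · intro h
    funext k
    by_cases hk : k ∈ S
    · simp [hk, h k hk]
    · simp [hk]

theorem pr_forall_mem_eq_prod_of_union {Ω ι : Type*} [Fintype Ω] [DecidableEq ι] (p : Ω → ℝ)
    (hp1 : ∑ ω, p ω = 1) {A : ι → Type*} [∀ k, Fintype (A k)] (F : ∀ k, Ω → A k)
    (S D : Finset ι)
    (h : ∀ g : ∀ k, A k, pr p (fun ω => ∀ k ∈ S ∪ D, F k ω = g k)
      = ∏ k ∈ S ∪ D, pr p (fun ω => F k ω = g k)) (g : ∀ k, A k) :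
    pr p (fun ω => ∀ k ∈ S, F k ω = g k) = ∏ k ∈ S, pr p (fun ω => F k ω = g k) := by
  induction D using Finset.induction_on with
  | empty => simpa using h g
  | insert a D _ ih =>
    apply ih
    intro g
    by_cases haS : a ∈ S ∪ D
    · have hu : S ∪ insert a D = S ∪ D := by
        rw [Finset.union_insert, Finset.insert_eq_of_mem haS]
      rw [hu] at h
      exact h g
    · rw [← sum_pr_and_eq p _ (F a)]
      have key : ∀ c : A a, pr p (fun ω => (∀ k ∈ S ∪ D, F k ω = g k) ∧ F a ω = c)
          = pr p (fun ω => F a ω = c) * ∏ k ∈ S ∪ D, pr p (fun ω => F k ω = g k) := by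
        intro c
        have h' := h (Function.update g a c)
        rw [Finset.union_insert, Finset.prod_insert haS] at h'
        have hne : ∀ k ∈ S ∪ D, Function.update g a c k = g k := fun k hk =>
          Function.update_of_ne (by rintro rfl; exact haS hk) _ _
        rw [Function.update_self, Finset.prod_congr rfl fun k hk => by rw [hne k hk]] at h'
        rw [← h']
        congr 1
        funext ω
        rw [Finset.forall_mem_insert, Function.update_self, and_comm]
        exact propext (and_congr_right fun _ =>
          forall₂_congr fun k hk => by rw [hne k hk])
      simp_rw [key]
      rw [← Finset.sum_mul, sum_pr_eq p hp1, one_mul]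

/-! ### Collisions of the recursive function -/

/-- Two bit strings agree on all coordinates from `M` on. -/
def AgreeFrom {n : ℕ} (M : ℕ) (x y : Fin n → Bool) : Prop :=
  ∀ t : Fin n, M ≤ (t : ℕ) → x t = y t

theorem rRec_congr (n : ℕ) (f g : ∀ m : ℕ, (Fin m → Bool) → (Fin m → Bool)) (m : ℕ)
    (h : ∀ k ∈ Finset.Icc m n, f k = g k) (x : Fin n → Bool) :
    rRec n f m x = rRec n g m x := by
  induction hk : n + 1 - m generalizing m x with
  | zero =>
    rw [rRec, rRec, dif_neg (by omega), dif_neg (by omega)]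
  | succ k ih =>
    have hm : m ≤ n := by omega
    rw [rRec, rRec, dif_pos hm, dif_pos hm]
    have hs : rStep n f m hm x = rStep n g m hm x := by
      unfold rStep
      rw [h m (by simp [hm])]
    rw [hs]
    refine ih (m + 1) (fun k hk => h k ?_) _ (by omega)
    simp only [Finset.mem_Icc] at hk ⊢
    omega

theorem agreeFrom_rStep_iff {n : ℕ} (f : ∀ m : ℕ, (Fin m → Bool) → (Fin m → Bool)) {m M : ℕ}
    (h : m ≤ n) (hM : m ≤ M) (x y : Fin n → Bool) :
    AgreeFrom M (rStep n f m h x) (rStep n f m h y) ↔ AgreeFrom M x y := by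
  refine forall₂_congr fun t ht => ?_
  have : ¬ (t : ℕ) < m := by omega
  simp [rStep, this]

theorem apply_msb_eq_of_rStep_eq {n : ℕ} (f : ∀ m : ℕ, (Fin m → Bool) → (Fin m → Bool)) {m : ℕ}
    (h : m ≤ n) {x y : Fin n → Bool} (hxy : rStep n f m h x = rStep n f m h y) :
    f m (msb m h x) = f m (msb m h y) := by
  funext t
  have := congrFun hxy ⟨t, lt_of_lt_of_le t.2 h⟩
  simpa [rStep] using this

theorem msb_ne_of_agreeFrom {n m : ℕ} (h : m ≤ n) {x y : Fin n → Bool} (hne : x ≠ y)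
    (ha : AgreeFrom m x y) : msb m h x ≠ msb m h y := by
  intro he
  apply hne
  funext t
  by_cases ht : (t : ℕ) < m
  · exact congrFun he ⟨t, ht⟩
  · exact ha t (by omega)

theorem pr_apply_eq_apply {Ω A : Type*} [Fintype Ω] [Fintype A] (p : Ω → ℝ) (F : Ω → A → A)
    (x y : A) (c : ℝ) (h : ∀ a b, pr p (fun ω => F ω x = a ∧ F ω y = b) = c) :
    pr p (fun ω => F ω x = F ω y) = Fintype.card A * c := by
  rw [← sum_pr_and_eq p _ (fun ω => F ω x)]
  have : ∀ a, pr p (fun ω => F ω x = F ω y ∧ F ω x = a) = c := by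
    intro a
    rw [← h a a]
    congr 1
    funext ω
    exact propext ⟨fun ⟨h1, h2⟩ => ⟨h2, h1 ▸ h2⟩, fun ⟨h1, h2⟩ => ⟨h1.trans h2.symm, h1⟩⟩
  simp [this]

theorem pr_mono {Ω : Type*} [Fintype Ω] {p : Ω → ℝ} (hp0 : ∀ ω, 0 ≤ p ω) {E E' : Ω → Prop}
    (h : ∀ ω, E ω → E' ω) : pr p E ≤ pr p E' := by
  refine Finset.sum_le_sum fun ω _ => ?_
  by_cases hE : E ω
  · simp [hE, h ω hE]
  · by_cases hE' : E' ω <;> simp [hE, hE', hp0 ω]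

theorem pr_le_one {Ω : Type*} [Fintype Ω] {p : Ω → ℝ} (hp0 : ∀ ω, 0 ≤ p ω)
    (hp1 : ∑ ω, p ω = 1) (E : Ω → Prop) : pr p E ≤ 1 := by
  calc pr p E ≤ pr p (fun _ => True) := pr_mono hp0 fun _ _ => trivial
    _ = 1 := by simpa [pr] using hp1

theorem pr_rStep_eq_le {Ω : Type*} [Fintype Ω] {p : Ω → ℝ} (hp0 : ∀ ω, 0 ≤ p ω)
    (hp1 : ∑ ω, p ω = 1) {n m : ℕ} (F : ∀ m : ℕ, Ω → (Fin m → Bool) → (Fin m → Bool))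
    (hmn : m ≤ n)
    (hpair : ∀ x y : Fin m → Bool, x ≠ y → ∀ a b : Fin m → Bool,
      pr p (fun ω => F m ω x = a ∧ F m ω y = b) = ((1 : ℝ) / 2 ^ m) ^ 2)
    (x y : Fin n → Bool) :
    pr p (fun ω => rStep n (fun k => F k ω) m hmn x = rStep n (fun k => F k ω) m hmn y)
      ≤ (if x = y then 1 else 0) + ((1 : ℝ) / 2) ^ m * (if AgreeFrom m x y then 1 else 0) := by
  by_cases hxy : x = y
  · rw [if_pos hxy]
    refine (pr_le_one hp0 hp1 _).trans ?_
    have : (0 : ℝ) ≤ ((1 : ℝ) / 2) ^ m * (if AgreeFrom m x y then 1 else 0) := by positivity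
    linarith
  · by_cases ha : AgreeFrom m x y
    · rw [if_neg hxy, if_pos ha]
      refine (pr_mono hp0 fun ω h => apply_msb_eq_of_rStep_eq _ hmn h).trans ?_
      rw [pr_apply_eq_apply p (F m) _ _ _ (hpair _ _ (msb_ne_of_agreeFrom hmn hxy ha))]
      simp only [Fintype.card_pi, Fintype.card_bool, Finset.prod_const, Finset.card_univ,
        Fintype.card_fin]
      push_cast
      apply le_of_eq
      field_simp
      simp
    · rw [if_neg hxy, if_neg ha]
      have h0 : ∀ ω, ¬ rStep n (fun k => F k ω) m hmn x = rStep n (fun k => F k ω) m hmn y := by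
        intro ω h
        exact ha ((agreeFrom_rStep_iff (fun k => F k ω) hmn le_rfl x y).1
          (by rw [h]; intro _ _; rfl))
      simp [pr, h0]

/-- The collision probability of `rRec` decomposes over the level at which two strings merge. -/
theorem pr_rRec_eq_le {Ω : Type*} [Fintype Ω] {p : Ω → ℝ} (hp0 : ∀ ω, 0 ≤ p ω)
    (hp1 : ∑ ω, p ω = 1) {n m₀ : ℕ} (F : ∀ m : ℕ, Ω → (Fin m → Bool) → (Fin m → Bool))
    (hpair : ∀ m, m₀ ≤ m → m ≤ n → ∀ x y : Fin m → Bool, x ≠ y →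
      ∀ a b : Fin m → Bool,
        pr p (fun ω => F m ω x = a ∧ F m ω y = b) = ((1 : ℝ) / 2 ^ m) ^ 2)
    (hprod : ∀ S ⊆ Finset.Icc m₀ n, ∀ g : ∀ m : ℕ, (Fin m → Bool) → (Fin m → Bool),
      pr p (fun ω => ∀ k ∈ S, F k ω = g k) = ∏ k ∈ S, pr p (fun ω => F k ω = g k))
    (m : ℕ) (hm : m₀ ≤ m) (x y : Fin n → Bool) :
    pr p (fun ω => rRec n (fun k => F k ω) m x = rRec n (fun k => F k ω) m y)
      ≤ (if x = y then 1 else 0)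
        + ∑ M ∈ Finset.Icc m n, ((1 : ℝ) / 2) ^ M * (if AgreeFrom M x y then 1 else 0) := by
  induction hk : n + 1 - m generalizing m x y with
  | zero =>
    have hmn : ¬ m ≤ n := by omega
    have hr : ∀ ω z, rRec n (fun k => F k ω) m z = z := fun ω z => by rw [rRec, dif_neg hmn]
    simp only [hr, Finset.Icc_eq_empty hmn, Finset.sum_empty, add_zero]
    by_cases hxy : x = y <;> simp [pr, hxy, hp1]
  | succ k ih =>
    have hmn : m ≤ n := by omega
    let U : Ω → (Fin m → Bool) → (Fin m → Bool) := F m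
    let V : Ω → ∀ k : ℕ, (Fin k → Bool) → (Fin k → Bool) :=
      fun ω => (Finset.Icc (m + 1) n).piecewise (fun k => F k ω) fun _ => id
    have hV : ∀ ω ω', V ω = V ω' ↔ ∀ k ∈ Finset.Icc (m + 1) n, F k ω = F k ω' :=
      fun ω ω' => piecewise_eq_piecewise_iff _ _ _ _
    have hUV : ∀ ω₁ ω₂, pr p (fun ω => U ω = U ω₁ ∧ V ω = V ω₂)
        = pr p (fun ω => U ω = U ω₁) * pr p (fun ω => V ω = V ω₂) := by
      intro ω₁ ω₂
      have hnot : m ∉ Finset.Icc (m + 1) n := by simp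
      have hne : ∀ k ∈ Finset.Icc (m + 1) n, k ≠ m := fun k hk e => hnot (e ▸ hk)
      have h1 := hprod (insert m (Finset.Icc (m + 1) n))
        (by intro k; simp only [Finset.mem_insert, Finset.mem_Icc]; omega)
        (fun k => F k (if k = m then ω₁ else ω₂))
      have h2 := hprod (Finset.Icc (m + 1) n)
        (by intro k; simp only [Finset.mem_Icc]; omega) (fun k => F k ω₂)
      rw [Finset.prod_insert hnot, if_pos rfl,
        Finset.prod_congr rfl fun k hk => by rw [if_neg (hne k hk)], ← h2] at h1
      simp only [hV]
      rw [← h1]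
      congr 1
      funext ω
      rw [Finset.forall_mem_insert, if_pos rfl]
      exact propext (and_congr_right fun _ => forall₂_congr fun k hk => by rw [if_neg (hne k hk)])
    let st : ((Fin m → Bool) → (Fin m → Bool)) → (Fin n → Bool) → (Fin n → Bool) :=
      fun u z t => if ht : (t : ℕ) < m then u (msb m hmn z) ⟨t.1, ht⟩ else z t
    have hst : ∀ ω z, rStep n (fun k => F k ω) m hmn z = st (U ω) z := fun ω z => rfl
    have hrec : ∀ ω z, rRec n (fun k => F k ω) m z = rRec n (V ω) (m + 1) (st (U ω) z) := by
      intro ω z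
      rw [rRec, dif_pos hmn, hst]
      exact rRec_congr n _ _ _ (fun k hk => (Finset.piecewise_eq_of_mem _ _ _ hk).symm) _
    have hrec' : ∀ ω z, rRec n (V ω) (m + 1) z = rRec n (fun k => F k ω) (m + 1) z :=
      fun ω z => rRec_congr n _ _ _ (fun k hk => Finset.piecewise_eq_of_mem _ _ _ hk) z
    rw [pr_eq_sum_mul]
    simp only [hrec]
    rw [sum_prob_decouple p U V hUV
      (fun u v => if rRec n v (m + 1) (st u x) = rRec n v (m + 1) (st u y) then 1 else 0)]
    have hstep : ∀ ω, ∑ ω', p ω' * (if rRec n (V ω') (m + 1) (st (U ω) x)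
          = rRec n (V ω') (m + 1) (st (U ω) y) then (1 : ℝ) else 0)
        ≤ (if st (U ω) x = st (U ω) y then 1 else 0) + ∑ M ∈ Finset.Icc (m + 1) n,
          ((1 : ℝ) / 2) ^ M * (if AgreeFrom M x y then 1 else 0) := by
      intro ω
      simp only [hrec']
      rw [← pr_eq_sum_mul]
      refine (ih (m + 1) (by omega) _ _ (by omega)).trans (le_of_eq ?_)
      congr 1
      refine Finset.sum_congr rfl fun M hM => ?_
      have hM' : m ≤ M := by simp only [Finset.mem_Icc] at hM; omega
      rw [← hst, ← hst]
      simp only [agreeFrom_rStep_iff _ hmn hM']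
    refine (Finset.sum_le_sum fun ω _ => mul_le_mul_of_nonneg_left (hstep ω) (hp0 ω)).trans ?_
    simp only [mul_add, Finset.sum_add_distrib]
    rw [← pr_eq_sum_mul, ← Finset.sum_mul, hp1, one_mul]
    have h1 := pr_rStep_eq_le hp0 hp1 F hmn (hpair m hm hmn) x y
    simp only [hst] at h1
    have hI : Finset.Icc m n = insert m (Finset.Icc (m + 1) n) := by
      ext k; simp only [Finset.mem_insert, Finset.mem_Icc]; omega
    rw [hI, Finset.sum_insert (by simp)]
    linarith

/-! ### Counting colliding rows and columns -/

/-- Upper bound for the collision probability of strings restricting to `i` and `i'`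
on the coordinates satisfying `P`. -/
noncomputable def collisionBound {n : ℕ} (m₀ : ℕ) (P : Fin n → Prop)
    (i i' : {t : Fin n // P t} → Bool) : ℝ :=
  (if i = i' then 1 else 0) + ∑ M ∈ Finset.Icc m₀ n,
    ((1 : ℝ) / 2) ^ M * (if ∀ t, M ≤ (t.1 : ℕ) → i t = i' t then 1 else 0)

theorem card_le_of_agree {n : ℕ} (P : Fin n → Prop) (M : ℕ) (i : {t : Fin n // P t} → Bool)
    (s : Finset ({t : Fin n // P t} → Bool))
    (hs : ∀ i' ∈ s, ∀ t, M ≤ (t.1 : ℕ) → i t = i' t) : s.card ≤ 2 ^ M := by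
  have hc : (Finset.univ : Finset (Fin M → Bool)).card = 2 ^ M := by simp
  rw [← hc]
  refine Finset.card_le_card_of_injOn
    (fun i' s => if h : ∃ t : {t : Fin n // P t}, (t.1 : ℕ) = s then i' h.choose else false)
    (fun _ _ => Finset.mem_coe.2 (Finset.mem_univ _)) ?_
  intro a ha b hb hab
  funext t
  by_cases ht : M ≤ (t.1 : ℕ)
  · rw [← hs a ha t ht, hs b hb t ht]
  · have hex : ∃ t' : {t : Fin n // P t}, (t'.1 : ℕ) = (⟨t.1, by omega⟩ : Fin M) := ⟨t, rfl⟩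
    have hch : hex.choose = t := Subtype.ext (Fin.ext hex.choose_spec)
    have := congrFun hab ⟨t.1, by omega⟩
    simp only [dif_pos hex] at this
    rwa [hch] at this

theorem sum_collisionBound_le {n : ℕ} (m₀ : ℕ) (hm₀ : 1 ≤ m₀) (P : Fin n → Prop)
    [Fintype {t : Fin n // P t}] (i : {t : Fin n // P t} → Bool) :
    ∑ i', collisionBound m₀ P i i' ≤ 1 + n := by
  unfold collisionBound
  rw [Finset.sum_add_distrib, Finset.sum_comm]
  have h2 : ∀ M ∈ Finset.Icc m₀ n, ∑ i' : {t : Fin n // P t} → Bool, ((1 : ℝ) / 2) ^ M *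
      (if ∀ t, M ≤ (t.1 : ℕ) → i t = i' t then (1 : ℝ) else 0) ≤ 1 := by
    intro M _
    rw [← Finset.mul_sum, Finset.sum_boole]
    have hcard := card_le_of_agree P M i
      (Finset.univ.filter fun i' => ∀ t, M ≤ (t.1 : ℕ) → i t = i' t)
      fun i' hi' => (Finset.mem_filter.1 hi').2
    calc ((1 : ℝ) / 2) ^ M * _ ≤ ((1 : ℝ) / 2) ^ M * 2 ^ M :=
          mul_le_mul_of_nonneg_left (by convert (Nat.cast_le (α := ℝ)).2 hcard; simp)
            (by positivity)
      _ = 1 := by rw [← mul_pow]; norm_num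
  have h3 := Finset.sum_le_card_nsmul _ _ _ h2
  rw [Nat.card_Icc, nsmul_eq_mul, mul_one] at h3
  have h4 : ((n + 1 - m₀ : ℕ) : ℝ) ≤ n := by
    exact_mod_cast (by omega : n + 1 - m₀ ≤ n)
  refine add_le_add ((Finset.sum_eq_single i (fun b _ hb => if_neg hb.symm)
    (by simp)).trans (if_pos rfl)).le (le_trans (le_of_eq ?_) (h3.trans h4))
  congr!

theorem le_collisionBound {n : ℕ} (m₀ : ℕ) (P : Fin n → Prop)
    (i i' : {t : Fin n // P t} → Bool) (x y : Fin n → Bool)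
    (hx : ∀ t, x t.1 = i t) (hy : ∀ t, y t.1 = i' t) :
    (if x = y then 1 else 0)
        + ∑ M ∈ Finset.Icc m₀ n, ((1 : ℝ) / 2) ^ M * (if AgreeFrom M x y then 1 else 0)
      ≤ collisionBound m₀ P i i' := by
  have hmono : ∀ (Q R : Prop) [Decidable Q] [Decidable R], (Q → R) →
      (if Q then (1 : ℝ) else 0) ≤ if R then 1 else 0 := by
    intro Q R _ _ h
    by_cases hQ : Q
    · simp [hQ, h hQ]
    · by_cases hR : R <;> simp [hQ, hR]
  unfold collisionBound
  refine add_le_add (hmono _ _ fun h => ?_) (Finset.sum_le_sum fun M _ =>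
    mul_le_mul_of_nonneg_left (hmono _ _ fun h t ht => ?_) (by positivity))
  · funext t
    rw [← hx, ← hy, h]
  · rw [← hx, ← hy]
    exact h t.1 ht

/-! ### Fourth moments of four-wise independent signs -/

/-- The sign `(-1)^b`. -/
def bitSign (b : Bool) : ℝ := if b then -1 else 1

theorem bitSign_mul_self (b : Bool) : bitSign b * bitSign b = 1 := by
  cases b <;> simp [bitSign]

theorem sum_bitSign_eq_zero {Ω B : Type*} [Fintype Ω] (p : Ω → ℝ) (H : Ω → B → Bool)
    (hH : ∀ (s : Finset B) (b : B → Bool), s.card ≤ 4 →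
      pr p (fun ω => ∀ u ∈ s, H ω u = b u) = ((1 : ℝ) / 2) ^ s.card)
    {a b c d : B} (hab : a ≠ b) (hac : a ≠ c) (had : a ≠ d) :
    ∑ ω, p ω * (bitSign (H ω a) * (bitSign (H ω b) * bitSign (H ω c) * bitSign (H ω d))) = 0 := by
  set s : Finset B := {b, c, d} with hs
  have has : a ∉ s := by simp [hs, hab, hac, had]
  have hcard : s.card ≤ 3 := Finset.card_le_three
  let V : Ω → B → Bool := fun ω => s.piecewise (H ω) fun _ => false
  have hV : ∀ ω ω', V ω = V ω' ↔ ∀ u ∈ s, H ω u = H ω' u :=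
    fun ω ω' => piecewise_eq_piecewise_iff _ _ _ _
  have hone : ∀ v, pr p (fun ω => H ω a = v) = 1 / 2 := by
    intro v
    have := hH {a} (fun _ => v) (by simp)
    simpa using this
  have hUV : ∀ ω₁ ω₂, pr p (fun ω => H ω a = H ω₁ a ∧ V ω = V ω₂)
      = pr p (fun ω => H ω a = H ω₁ a) * pr p (fun ω => V ω = V ω₂) := by
    intro ω₁ ω₂
    have hne : ∀ u ∈ s, u ≠ a := fun u hu e => has (e ▸ hu)
    have h1 := hH (insert a s) (fun u => H (if u = a then ω₁ else ω₂) u)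
      (by rw [Finset.card_insert_of_notMem has]; omega)
    rw [Finset.card_insert_of_notMem has, pow_succ'] at h1
    simp only [hV]
    rw [hone, hH s (H ω₂) (by omega), ← h1]
    congr 1
    funext ω
    rw [Finset.forall_mem_insert a s, if_pos rfl]
    exact propext (and_congr_right fun _ => forall₂_congr fun k hk => by rw [if_neg (hne k hk)])
  have hdec := sum_prob_decouple p (fun ω => H ω a) V hUV
    (fun u v => bitSign u * (bitSign (v b) * bitSign (v c) * bitSign (v d)))
  have hb : ∀ ω, V ω b = H ω b := fun ω => by simp [V, hs]
  have hc : ∀ ω, V ω c = H ω c := fun ω => by simp [V, hs]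
  have hd : ∀ ω, V ω d = H ω d := fun ω => by simp [V, hs]
  simp only [hb, hc, hd] at hdec
  rw [hdec]
  have hz : ∑ ω, p ω * bitSign (H ω a) = 0 := by
    have : ∑ ω, p ω * bitSign (H ω a)
        = pr p (fun ω => H ω a = false) - pr p (fun ω => H ω a = true) := by
      unfold pr
      rw [← Finset.sum_sub_distrib]
      refine Finset.sum_congr rfl fun ω _ => ?_
      cases h : H ω a <;> simp [bitSign, h]
    rw [this, hone, hone, sub_self]
  have hfac : ∀ ω, p ω * ∑ ω', p ω' * (bitSign (H ω a) *
      (bitSign (H ω' b) * bitSign (H ω' c) * bitSign (H ω' d)))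
      = p ω * bitSign (H ω a) * ∑ ω', p ω' *
      (bitSign (H ω' b) * bitSign (H ω' c) * bitSign (H ω' d)) := by
    intro ω
    rw [mul_assoc, Finset.mul_sum _ _ (bitSign (H ω a))]
    congr 1
    exact Finset.sum_congr rfl fun ω' _ => by ring
  simp only [hfac]
  rw [← Finset.sum_mul, hz, zero_mul]

theorem bitSign_mul_four_le_one (a b c d : Bool) :
    bitSign a * (bitSign b * bitSign c * bitSign d) ≤ 1 := by
  cases a <;> cases b <;> cases c <;> cases d <;> simp [bitSign]

theorem sum_bitSign_le {Ω B : Type*} [Fintype Ω] {p : Ω → ℝ} (hp0 : ∀ ω, 0 ≤ p ω)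
    (hp1 : ∑ ω, p ω = 1) (H : Ω → B → Bool)
    (hH : ∀ (s : Finset B) (b : B → Bool), s.card ≤ 4 →
      pr p (fun ω => ∀ u ∈ s, H ω u = b u) = ((1 : ℝ) / 2) ^ s.card)
    (a b c d : B) :
    ∑ ω, p ω * (bitSign (H ω a) * (bitSign (H ω b) * bitSign (H ω c) * bitSign (H ω d)))
      ≤ (if a = b then 1 else 0) + (if a = c then 1 else 0) + (if a = d then 1 else 0) := by
  have hle : ∑ ω, p ω * (bitSign (H ω a) *
      (bitSign (H ω b) * bitSign (H ω c) * bitSign (H ω d))) ≤ 1 := by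
    rw [← hp1]
    exact Finset.sum_le_sum fun ω _ =>
      mul_le_of_le_one_right (hp0 ω) (bitSign_mul_four_le_one _ _ _ _)
  by_cases hab : a = b
  · rw [if_pos hab]
    have : (0 : ℝ) ≤ (if a = c then 1 else 0) + (if a = d then 1 else 0) := by positivity
    linarith
  by_cases hac : a = c
  · rw [if_pos hac, if_neg hab]
    have : (0 : ℝ) ≤ (if a = d then 1 else 0) := by positivity
    linarith
  by_cases had : a = d
  · rw [if_pos had, if_neg hab, if_neg hac]
    linarith
  rw [sum_bitSign_eq_zero p H hH hab hac had, if_neg hab, if_neg hac, if_neg had]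
  norm_num

/-! ### Entropy and purity -/

theorem trace_mul_self_eq_sum_eigenvalues_sq {d : Type*} [Fintype d] [DecidableEq d]
    {ρ : Matrix d d ℝ} (h : ρ.IsHermitian) : (ρ * ρ).trace = ∑ i, h.eigenvalues i ^ 2 := by
  conv_lhs => rw [h.spectral_theorem, ← map_mul, Unitary.conjStarAlgAut_apply, trace_mul_cycle,
    Unitary.coe_star_mul_self, one_mul, diagonal_mul_diagonal, trace_diagonal]
  simp [sq]

/-- The von Neumann entropy is bounded below by minus the logarithm of the purity. -/
theorem neg_logb_le_vnEntropy {d : Type*} [Fintype d] [DecidableEq d] {ρ : Matrix d d ℝ}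
    (h : ρ.PosSemidef) (htr : ρ.trace = 1) {c : ℝ} (hc : 0 < c) (hρ : (ρ * ρ).trace ≤ c) :
    -Real.logb 2 c ≤ vnEntropy ρ := by
  have hH := h.isHermitian
  rw [vnEntropy, dif_pos hH, neg_le_neg_iff]
  have hsum : ∑ i, hH.eigenvalues i = 1 := by
    have := hH.trace_eq_sum_eigenvalues
    rw [htr] at this
    simpa using this.symm
  rw [trace_mul_self_eq_sum_eigenvalues_sq hH] at hρ
  have hi : ∀ i, hH.eigenvalues i * Real.log (hH.eigenvalues i)
      ≤ hH.eigenvalues i ^ 2 / c + hH.eigenvalues i * (Real.log c - 1) := by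
    intro i
    rcases (h.eigenvalues_nonneg i).eq_or_lt with h0 | h0
    · simp [← h0]
    · have := Real.log_le_sub_one_of_pos (div_pos h0 hc)
      rw [Real.log_div h0.ne' hc.ne'] at this
      have := mul_le_mul_of_nonneg_left this h0.le
      calc _ = hH.eigenvalues i * (Real.log (hH.eigenvalues i) - Real.log c)
              + hH.eigenvalues i * Real.log c := by ring
        _ ≤ hH.eigenvalues i * (hH.eigenvalues i / c - 1) + hH.eigenvalues i * Real.log c := by
            linarith
        _ = _ := by ring
  have hs := Finset.sum_le_sum fun i (_ : i ∈ Finset.univ) => hi i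
  rw [Finset.sum_add_distrib, ← Finset.sum_div, ← Finset.sum_mul, hsum, one_mul] at hs
  have hq : (∑ i, hH.eigenvalues i ^ 2) / c ≤ 1 := (div_le_one hc).2 hρ
  have hlog : (0 : ℝ) < Real.log 2 := Real.log_pos one_lt_two
  simp only [Real.logb, ← mul_div_assoc]
  rw [← Finset.sum_div]
  gcongr
  linarith

theorem trace_mul_transpose_sq {a b : Type*} [Fintype a] [Fintype b] (A : Matrix a b ℝ) :
    ((A * Aᵀ) * (A * Aᵀ)).trace
      = ∑ i, ∑ i', ∑ j, ∑ j', A i j * (A i' j * A i' j' * A i j') := by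
  simp only [trace, diag, mul_apply, transpose_apply, Finset.sum_mul_sum]
  refine Finset.sum_congr rfl fun i _ => Finset.sum_congr rfl fun i' _ =>
    Finset.sum_congr rfl fun j _ => Finset.sum_congr rfl fun j' _ => by ring

/-- In the multi-cut construction, across any cut `X` with
`1 ≤ |X| = m ≤ n/2`, with probability at least `1 - 5 n 2^{-m/2}` the von Neumann entropy of
`ρ = T Tᵀ / 2^n` is at least `m/4`. -/
theorem statement2
    (n m₀ : ℕ) (hn : 1 ≤ n) (hm₀ : 1 ≤ m₀) (hm₀n : m₀ ≤ n)
    (Ω : Type*) [Fintype Ω] (p : Ω → ℝ)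
    (hp0 : ∀ ω, 0 ≤ p ω) (hp1 : ∑ ω, p ω = 1)
    (F : ∀ m : ℕ, Ω → (Fin m → Bool) → (Fin m → Bool))
    (Hf : Ω → (Fin n → Bool) → Bool)
    -- each `F m` (for `m₀ ≤ m ≤ n`) is a pairwise independent random function
    (hFpair : ∀ m, m₀ ≤ m → m ≤ n → ∀ x y : Fin m → Bool, x ≠ y →
      ∀ a b : Fin m → Bool,
        pr p (fun ω => F m ω x = a ∧ F m ω y = b) = ((1 : ℝ) / 2 ^ m) ^ 2)
    -- `Hf` comes from a 4-wise independent family with a uniformly random key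
    (hH4 : ∀ (s : Finset (Fin n → Bool)) (b : (Fin n → Bool) → Bool), s.card ≤ 4 →
      pr p (fun ω => ∀ u ∈ s, Hf ω u = b u) = ((1 : ℝ) / 2) ^ s.card)
    -- `F_{m₀}, …, F_n, Hf` are mutually independent
    (hInd : ∀ (g : ∀ m : ℕ, (Fin m → Bool) → (Fin m → Bool))
        (hh : (Fin n → Bool) → Bool),
      pr p (fun ω => (∀ m ∈ Finset.Icc m₀ n, F m ω = g m) ∧ Hf ω = hh)
        = (∏ m ∈ Finset.Icc m₀ n, pr p (fun ω => F m ω = g m))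
            * pr p (fun ω => Hf ω = hh))
    (X : Finset (Fin n)) (hX1 : 1 ≤ X.card) (hX2 : 2 * X.card ≤ n)
    (T : Ω → Matrix ({t : Fin n // t ∈ X} → Bool) ({t : Fin n // t ∉ X} → Bool) ℝ)
    (hT : ∀ ω i j,
      T ω i j =
        if Hf ω (rRec n (fun m => F m ω) m₀ (mergeCut X i j)) then (-1 : ℝ) else 1) :
    1 - 5 * (n : ℝ) * (2 : ℝ) ^ (-(X.card : ℝ) / 2)
      ≤ pr p (fun ω =>
          (X.card : ℝ) / 4
            ≤ vnEntropy (((1 : ℝ) / 2 ^ n) • (T ω * (T ω)ᵀ))) := by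
  have hprodIcc : ∀ g : ∀ m : ℕ, (Fin m → Bool) → (Fin m → Bool),
      pr p (fun ω => ∀ m ∈ Finset.Icc m₀ n, F m ω = g m)
        = ∏ m ∈ Finset.Icc m₀ n, pr p (fun ω => F m ω = g m) := by
    intro g
    rw [← sum_pr_and_eq p _ Hf, Finset.sum_congr rfl fun hh _ => hInd g hh, ← Finset.mul_sum,
      sum_pr_eq p hp1, mul_one]
  have hprod : ∀ S ⊆ Finset.Icc m₀ n, ∀ g : ∀ m : ℕ, (Fin m → Bool) → (Fin m → Bool),
      pr p (fun ω => ∀ k ∈ S, F k ω = g k) = ∏ k ∈ S, pr p (fun ω => F k ω = g k) := by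
    intro S hS g
    refine pr_forall_mem_eq_prod_of_union p hp1 F S (Finset.Icc m₀ n) ?_ g
    rw [Finset.union_eq_right.2 hS]
    exact hprodIcc
  let R : Ω → (Fin n → Bool) → (Fin n → Bool) := fun ω => rRec n (fun k => F k ω) m₀
  have hTR : ∀ ω i j, T ω i j = bitSign (Hf ω (R ω (mergeCut X i j))) := fun ω i j => hT ω i j
  have hcoll := pr_rRec_eq_le hp0 hp1 F hFpair hprod m₀ le_rfl
  have hmem : ∀ i j (t : {t : Fin n // t ∈ X}), mergeCut X i j t.1 = i t :=
    fun i j t => by simp [mergeCut, t.2]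
  have hnmem : ∀ i j (t : {t : Fin n // t ∉ X}), mergeCut X i j t.1 = j t :=
    fun i j t => by simp [mergeCut, t.2]
  have hrow : ∀ i i' j j', pr p (fun ω => R ω (mergeCut X i j) = R ω (mergeCut X i' j'))
      ≤ collisionBound m₀ (· ∈ X) i i' := fun i i' j j' =>
    (hcoll _ _).trans (le_collisionBound m₀ (· ∈ X) i i' _ _ (hmem i j) (hmem i' j'))
  have hcol : ∀ i i' j j', pr p (fun ω => R ω (mergeCut X i j) = R ω (mergeCut X i' j'))
      ≤ collisionBound m₀ (· ∉ X) j j' := fun i i' j j' =>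
    (hcoll _ _).trans (le_collisionBound m₀ (· ∉ X) j j' _ _ (hnmem i j) (hnmem i' j'))
  let V : Ω → ∀ k : ℕ, (Fin k → Bool) → (Fin k → Bool) :=
    fun ω => (Finset.Icc m₀ n).piecewise (fun k => F k ω) fun _ => id
  have hRV : ∀ ω x, R ω x = rRec n (V ω) m₀ x := fun ω x =>
    rRec_congr n _ _ _ (fun k hk => (Finset.piecewise_eq_of_mem _ _ _ hk).symm) x
  have hVH : ∀ ω₁ ω₂, pr p (fun ω => V ω = V ω₁ ∧ Hf ω = Hf ω₂)
      = pr p (fun ω => V ω = V ω₁) * pr p (fun ω => Hf ω = Hf ω₂) := by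
    intro ω₁ ω₂
    simp only [V, piecewise_eq_piecewise_iff]
    rw [hprodIcc (fun k => F k ω₁), ← hInd (fun k => F k ω₁)]
  have hfour : ∀ x y z w, ∑ ω, p ω * (bitSign (Hf ω (R ω x)) * (bitSign (Hf ω (R ω y))
        * bitSign (Hf ω (R ω z)) * bitSign (Hf ω (R ω w))))
      ≤ pr p (fun ω => R ω x = R ω y) + pr p (fun ω => R ω x = R ω z)
        + pr p (fun ω => R ω x = R ω w) := by
    intro x y z w
    simp only [hRV]
    rw [sum_prob_decouple p V Hf hVH (fun v h => bitSign (h (rRec n v m₀ x))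
      * (bitSign (h (rRec n v m₀ y)) * bitSign (h (rRec n v m₀ z))
        * bitSign (h (rRec n v m₀ w))))]
    refine (Finset.sum_le_sum fun ω _ => mul_le_mul_of_nonneg_left
      (sum_bitSign_le hp0 hp1 Hf hH4 _ _ _ _) (hp0 ω)).trans ?_
    simp only [pr_eq_sum_mul, mul_add, Finset.sum_add_distrib]
    apply le_of_eq
    congr!
  have hc1 : (Fintype.card ({t : Fin n // t ∈ X} → Bool) : ℝ) = 2 ^ X.card := by simp
  have hc2 : (Fintype.card ({t : Fin n // t ∉ X} → Bool) : ℝ) = 2 ^ (n - X.card) := by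
    simp [Fintype.card_subtype_compl]
  set Q : Ω → ℝ := fun ω => ((T ω * (T ω)ᵀ) * (T ω * (T ω)ᵀ)).trace with hQ
  have hQE : ∑ ω, p ω * Q ω ≤ (1 + n) * (2 * 2 ^ X.card * (2 ^ (n - X.card)) ^ 2
      + 2 ^ (n - X.card) * (2 ^ X.card) ^ 2) := by
    have h1 : ∑ ω, p ω * Q ω ≤ ∑ i, ∑ i', ∑ j, ∑ j',
        (2 * collisionBound m₀ (· ∈ X) i i' + collisionBound m₀ (· ∉ X) j j') := by
      simp only [hQ, trace_mul_transpose_sq, Finset.mul_sum, hTR]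
      rw [Finset.sum_comm]
      refine Finset.sum_le_sum fun i _ => ?_
      rw [Finset.sum_comm]
      refine Finset.sum_le_sum fun i' _ => ?_
      rw [Finset.sum_comm]
      refine Finset.sum_le_sum fun j _ => ?_
      rw [Finset.sum_comm]
      refine Finset.sum_le_sum fun j' _ => ?_
      refine (hfour _ _ _ _).trans ?_
      have := hrow i i' j j
      have := hrow i i' j j'
      have := hcol i i j j'
      linarith
    refine h1.trans ?_
    have h2 : ∑ i, ∑ i', ∑ j, ∑ j',
        (2 * collisionBound m₀ (· ∈ X) i i' + collisionBound m₀ (· ∉ X) j j')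
        = 2 * (2 ^ (n - X.card)) ^ 2 * ∑ i, ∑ i', collisionBound m₀ (· ∈ X) i i'
          + (2 ^ X.card) ^ 2 * ∑ j, ∑ j', collisionBound m₀ (· ∉ X) j j' := by
      simp only [Finset.sum_add_distrib, Finset.sum_const, Finset.card_univ, nsmul_eq_mul, hc1,
        hc2, ← Finset.mul_sum]
      ring
    have h3 : ∑ i, ∑ i', collisionBound m₀ (· ∈ X) i i' ≤ 2 ^ X.card * (1 + n) := by
      rw [← hc1, ← nsmul_eq_mul]
      exact Finset.sum_le_card_nsmul _ _ _ fun i _ => sum_collisionBound_le m₀ hm₀ _ i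
    have h4 : ∑ j, ∑ j', collisionBound m₀ (· ∉ X) j j' ≤ 2 ^ (n - X.card) * (1 + n) := by
      rw [← hc2, ← nsmul_eq_mul]
      exact Finset.sum_le_card_nsmul _ _ _ fun i _ => sum_collisionBound_le m₀ hm₀ _ i
    rw [h2]
    calc _ ≤ 2 * (2 ^ (n - X.card)) ^ 2 * (2 ^ X.card * (1 + (n : ℝ)))
          + (2 ^ X.card) ^ 2 * (2 ^ (n - X.card) * (1 + (n : ℝ))) := by gcongr
      _ = _ := by ring
  set c : ℝ := (2 : ℝ) ^ (-(X.card : ℝ) / 2) with hc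
  have hcpos : 0 < c := by positivity
  have hcc : c * c = 1 / 2 ^ X.card := by
    rw [hc, ← Real.rpow_add two_pos, ← Real.rpow_natCast, one_div, ← Real.rpow_neg two_pos.le]
    congr 1
    ring
  set ρ : Ω → Matrix ({t : Fin n // t ∈ X} → Bool) ({t : Fin n // t ∈ X} → Bool) ℝ :=
    fun ω => ((1 : ℝ) / 2 ^ n) • (T ω * (T ω)ᵀ) with hρ
  have hρtr : ∀ ω, (ρ ω * ρ ω).trace = (1 / 2 ^ n) ^ 2 * Q ω := by
    intro ω
    simp only [hρ, hQ, smul_mul_smul_comm, trace_smul, smul_eq_mul]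
    ring
  have hpow : (2 : ℝ) ^ X.card * 2 ^ (n - X.card) = 2 ^ n := by
    rw [← pow_add]
    congr 1
    omega
  have hpsd : ∀ ω, (ρ ω).PosSemidef := by
    intro ω
    have h := Matrix.posSemidef_self_mul_conjTranspose (T ω)
    rw [conjTranspose_eq_transpose_of_trivial] at h
    exact h.smul (by positivity)
  have htr1 : ∀ ω, (ρ ω).trace = 1 := by
    intro ω
    rw [hρ, trace_smul]
    simp only [trace, diag, mul_apply, transpose_apply, hTR, bitSign_mul_self,
      Finset.sum_const, Finset.card_univ, nsmul_eq_mul, hc1, hc2, smul_eq_mul, mul_one]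
    rw [hpow]
    field_simp
  have hent : ∀ ω, (ρ ω * ρ ω).trace ≤ c → (X.card : ℝ) / 4 ≤ vnEntropy (ρ ω) := by
    intro ω h
    refine le_trans ?_ (neg_logb_le_vnEntropy (hpsd ω) (htr1 ω) hcpos h)
    rw [hc, Real.logb_rpow two_pos (by norm_num)]
    have : (0 : ℝ) ≤ X.card := by positivity
    linarith
  have hmarkov : ∀ ω, p ω * (1 - (ρ ω * ρ ω).trace / c)
      ≤ if (X.card : ℝ) / 4 ≤ vnEntropy (ρ ω) then p ω else 0 := by
    intro ω
    by_cases hle : (ρ ω * ρ ω).trace ≤ c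
    · rw [if_pos (hent ω hle)]
      refine mul_le_of_le_one_right (hp0 ω) ?_
      have : 0 ≤ (ρ ω * ρ ω).trace := by
        rw [trace_mul_self_eq_sum_eigenvalues_sq (hpsd ω).isHermitian]
        positivity
      have : 0 ≤ (ρ ω * ρ ω).trace / c := by positivity
      linarith
    · have h1 : 1 ≤ (ρ ω * ρ ω).trace / c := (one_le_div hcpos).2 (not_le.1 hle).le
      refine (mul_nonpos_of_nonneg_of_nonpos (hp0 ω) (by linarith)).trans ?_
      split_ifs
      · exact hp0 ω
      · exact le_rfl
  have hsum := Finset.sum_le_sum fun ω (_ : ω ∈ Finset.univ) => hmarkov ω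
  refine le_trans ?_ hsum
  have hE : ∑ ω, p ω * (1 - (ρ ω * ρ ω).trace / c)
      = 1 - (1 / 2 ^ n) ^ 2 / c * ∑ ω, p ω * Q ω := by
    simp only [hρtr, mul_sub, mul_one, Finset.sum_sub_distrib, hp1, Finset.mul_sum]
    congr 1
    exact Finset.sum_congr rfl fun ω _ => by ring
  rw [hE]
  have hpur : (1 / 2 ^ n) ^ 2 * ∑ ω, p ω * Q ω ≤ 5 * n * (c * c) := by
    have hle : (2 : ℝ) ^ X.card ≤ 2 ^ (n - X.card) :=
      pow_le_pow_right₀ one_le_two (by omega)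
    have hn2 : (2 : ℝ) ≤ n := by exact_mod_cast (by omega : 2 ≤ n)
    refine (mul_le_mul_of_nonneg_left hQE (by positivity)).trans ?_
    rw [hcc, ← hpow]
    set A : ℝ := 2 ^ X.card
    set B : ℝ := 2 ^ (n - X.card)
    have hA : 0 < A := by positivity
    have hB : 0 < B := by positivity
    have hAB : B * A ^ 2 ≤ A * B ^ 2 := by
      nlinarith [mul_pos hA hB]
    calc (1 / (A * B)) ^ 2 * ((1 + (n : ℝ)) * (2 * A * B ^ 2 + B * A ^ 2))
        ≤ (1 / (A * B)) ^ 2 * ((1 + (n : ℝ)) * (2 * A * B ^ 2 + A * B ^ 2)) := by gcongr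
      _ = 3 * (1 + n) * (1 / A) := by field_simp; ring
      _ ≤ 5 * n * (1 / A) := by
        refine mul_le_mul_of_nonneg_right ?_ (by positivity)
        linarith
  have : (1 / 2 ^ n) ^ 2 / c * ∑ ω, p ω * Q ω ≤ 5 * n * c := by
    rw [div_mul_eq_mul_div, div_le_iff₀ hcpos]
    linarith
  linarith
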